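/- Fix an integer k ≥ 1 and integers n, n' ≥ 1. Let σ ∈ S_{n+n'}, let τ, τ̃ ∈ S_n with τ ≡ᵏ τ̃, and let τ', τ̃' ∈ S_{n'} with τ' ≡ᵏ τ̃'. If there exists σ' ∈ S_{n+n'} with σ' ≡ᵏ σ and σ' ∈ τ ⋆ τ' (the convolution), then there exists σ'' ∈ S_{n+n'} with σ'' ≡ᵏ σ and σ'' ∈ τ̃ ⋆ τ̃'. -/

import Mathlib

/-!
A rewriting step on `τ` exchanges the entries at positions `p, p + 1`. If `σ` lies in `τ ⋆ τ'`,
exchanging the entries of `σ` at the same positions is again a rewriting step: the block of `σ`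
standardizing to `τ` has the same relative order as `τ`, so each later value of `τ` strictly between
the exchanged ones yields a later value of `σ` strictly between the exchanged ones
(`twistStep_lift`). The result lies in the convolution with the rewritten `τ`
(`convolutionMem_swap_left`), and likewise for `τ'` with positions shifted by `n`. Hence
"every member of `τ ⋆ τ'` is congruent to a member of `τt ⋆ τ'`, and conversely" holds for each
generating step and passes to the generated equivalence relation.
-/

/-- One rewriting step of the `k`-twist congruence: exchange two adjacent entries of the
one-line notation (positions `p` and `q = p+1`) provided at least `k` values strictly
between the two exchanged values occur at later positions. -/
def twistStep (k : ℕ) {n : ℕ} (τ τ' : Equiv.Perm (Fin n)) : Prop :=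
  ∃ p q : Fin n, (q : ℕ) = (p : ℕ) + 1 ∧ τ' = τ * Equiv.swap p q ∧
    k ≤ (Finset.univ.filter (fun b : Fin n =>
      min (τ p) (τ q) < b ∧ b < max (τ p) (τ q) ∧ q < τ.symm b)).card

/-- The `k`-twist congruence `≡ᵏ` on permutations of `Fin n`: the equivalence relation
generated by the rewriting rule `twistStep`. -/
def twistCong (k : ℕ) {n : ℕ} : Equiv.Perm (Fin n) → Equiv.Perm (Fin n) → Prop :=
  Relation.EqvGen (twistStep k)

/-- `σ` belongs to the convolution `τ ⋆ τ'`: the standardization of the first `n` entries of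
the one-line notation of `σ` is `τ`, and the standardization of the last `n'` entries
is `τ'`. -/
def convolutionMem {n n' : ℕ} (τ : Equiv.Perm (Fin n)) (τ' : Equiv.Perm (Fin n'))
    (σ : Equiv.Perm (Fin (n + n'))) : Prop :=
  (∀ p q : Fin n, (σ (Fin.castAdd n' p) < σ (Fin.castAdd n' q) ↔ τ p < τ q)) ∧
  (∀ p q : Fin n', (σ (Fin.natAdd n p) < σ (Fin.natAdd n q) ↔ τ' p < τ' q))

/-- A rewriting step on `τ` at positions `p, p + 1` lifts to one on `ρ` at positions
`f p, f (p + 1)` when `f` places the positions of `τ` as a block of consecutive positions of `ρ`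
whose entries standardize to `τ`. -/
lemma twistStep_lift {k n m : ℕ} {f : Fin n → Fin m} (hf : StrictMono f)
    {τ : Equiv.Perm (Fin n)} {ρ : Equiv.Perm (Fin m)}
    (hρ : ∀ p q, ρ (f p) < ρ (f q) ↔ τ p < τ q) {p q : Fin n}
    (hpq : (f q : ℕ) = (f p : ℕ) + 1)
    (hk : k ≤ (Finset.univ.filter (fun b : Fin n =>
      min (τ p) (τ q) < b ∧ b < max (τ p) (τ q) ∧ q < τ.symm b)).card) :
    twistStep k ρ (ρ * Equiv.swap (f p) (f q)) := by
  refine ⟨f p, f q, hpq, rfl, hk.trans ?_⟩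
  refine Finset.card_le_card_of_injOn (fun b => ρ (f (τ.symm b))) ?_ ?_
  · intro b hb
    obtain ⟨c, rfl⟩ := τ.surjective b
    simp only [Finset.coe_filter, Finset.mem_univ, true_and, Set.mem_ofPred_eq, min_lt_iff,
      lt_max_iff, Equiv.symm_apply_apply, hρ, hf.lt_iff_lt] at hb ⊢
    exact hb
  · exact (ρ.injective.comp (hf.injective.comp τ.symm.injective)).injOn

lemma convolutionMem_swap_left {n n' : ℕ} {τ : Equiv.Perm (Fin n)} {τ' : Equiv.Perm (Fin n')}
    {σ : Equiv.Perm (Fin (n + n'))} (h : convolutionMem τ τ' σ) (p q : Fin n) :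
    convolutionMem (τ * Equiv.swap p q) τ'
      (σ * Equiv.swap (Fin.castAdd n' p) (Fin.castAdd n' q)) := by
  have hne : ∀ (a : Fin n) (b : Fin n'), Fin.natAdd n b ≠ Fin.castAdd n' a := by
    intro a b hab
    have := congrArg Fin.val hab
    simp only [Fin.val_natAdd, Fin.val_castAdd] at this
    omega
  refine ⟨fun a b => ?_, fun a b => ?_⟩
  · simp only [Equiv.Perm.mul_apply, (Fin.castAdd_injective n n').swap_apply]
    exact h.1 _ _
  · simp only [Equiv.Perm.mul_apply, Equiv.swap_apply_of_ne_of_ne (hne _ _) (hne _ _)]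
    exact h.2 _ _

lemma convolutionMem_swap_right {n n' : ℕ} {τ : Equiv.Perm (Fin n)} {τ' : Equiv.Perm (Fin n')}
    {σ : Equiv.Perm (Fin (n + n'))} (h : convolutionMem τ τ' σ) (p q : Fin n') :
    convolutionMem τ (τ' * Equiv.swap p q)
      (σ * Equiv.swap (Fin.natAdd n p) (Fin.natAdd n q)) := by
  have hne : ∀ (a : Fin n') (b : Fin n), Fin.castAdd n' b ≠ Fin.natAdd n a := by
    intro a b hab
    have := congrArg Fin.val hab
    simp only [Fin.val_natAdd, Fin.val_castAdd] at this
    omega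
  refine ⟨fun a b => ?_, fun a b => ?_⟩
  · simp only [Equiv.Perm.mul_apply, Equiv.swap_apply_of_ne_of_ne (hne _ _) (hne _ _)]
    exact h.1 _ _
  · simp only [Equiv.Perm.mul_apply, (Fin.natAdd_injective n' n).swap_apply]
    exact h.2 _ _

/-- If a family of sets `S x` of permutations is such that, along each generating step
`r x y`, every member of `S x` is `k`-twist congruent to a member of `S y` and conversely, then
the same holds along the equivalence relation generated by `r`. -/
lemma exists_twistCong_of_eqvGen {α : Type*} {r : α → α → Prop} {k m : ℕ}
    {S : α → Equiv.Perm (Fin m) → Prop}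
    (hfwd : ∀ x y, r x y → ∀ σ, S x σ → ∃ ρ, twistCong k ρ σ ∧ S y ρ)
    (hbwd : ∀ x y, r x y → ∀ σ, S y σ → ∃ ρ, twistCong k ρ σ ∧ S x ρ)
    {x y : α} (h : Relation.EqvGen r x y) :
    (∀ σ, S x σ → ∃ ρ, twistCong k ρ σ ∧ S y ρ) ∧
      (∀ σ, S y σ → ∃ ρ, twistCong k ρ σ ∧ S x ρ) := by
  induction h with
  | rel x y h => exact ⟨hfwd x y h, hbwd x y h⟩
  | refl x =>
    exact ⟨fun σ h => ⟨σ, .refl _, h⟩, fun σ h => ⟨σ, .refl _, h⟩⟩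
  | symm x y _ ih => exact ih.symm
  | trans x y z _ _ ih₁ ih₂ =>
    refine ⟨fun σ h => ?_, fun σ h => ?_⟩
    · obtain ⟨ρ, hρ, h⟩ := ih₁.1 σ h
      obtain ⟨ω, hω, h⟩ := ih₂.1 ρ h
      exact ⟨ω, .trans _ _ _ hω hρ, h⟩
    · obtain ⟨ρ, hρ, h⟩ := ih₂.2 σ h
      obtain ⟨ω, hω, h⟩ := ih₁.2 ρ h
      exact ⟨ω, .trans _ _ _ hω hρ, h⟩

lemma exists_convolutionMem_left {k n n' : ℕ} {τ τt : Equiv.Perm (Fin n)}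
    {τ' : Equiv.Perm (Fin n')} (h : twistCong k τ τt) {σ : Equiv.Perm (Fin (n + n'))}
    (hσ : convolutionMem τ τ' σ) : ∃ ρ, twistCong k ρ σ ∧ convolutionMem τt τ' ρ := by
  refine (exists_twistCong_of_eqvGen (S := fun x => convolutionMem x τ') ?_ ?_ h).1 σ hσ
  · rintro x _ ⟨p, q, hpq, rfl, hk⟩ σ hσ
    exact ⟨_, .symm _ _ (.rel _ _ (twistStep_lift (Fin.strictMono_castAdd n') hσ.1
      (by simpa using hpq) hk)), convolutionMem_swap_left hσ p q⟩
  · rintro x _ ⟨p, q, hpq, rfl, hk⟩ σ hσ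
    -- Exchanging the two entries again recovers `x`, and the step leads back to `σ`.
    have hρ := convolutionMem_swap_left hσ p q
    rw [mul_assoc, Equiv.swap_mul_self, mul_one] at hρ
    refine ⟨_, .rel _ _ ?_, hρ⟩
    have := twistStep_lift (Fin.strictMono_castAdd n') hρ.1 (by simpa using hpq) hk
    rwa [mul_assoc, Equiv.swap_mul_self, mul_one] at this

lemma exists_convolutionMem_right {k n n' : ℕ} {τ : Equiv.Perm (Fin n)}
    {τ' τt' : Equiv.Perm (Fin n')} (h : twistCong k τ' τt') {σ : Equiv.Perm (Fin (n + n'))}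
    (hσ : convolutionMem τ τ' σ) : ∃ ρ, twistCong k ρ σ ∧ convolutionMem τ τt' ρ := by
  refine (exists_twistCong_of_eqvGen (S := fun x => convolutionMem τ x) ?_ ?_ h).1 σ hσ
  · rintro x _ ⟨p, q, hpq, rfl, hk⟩ σ hσ
    exact ⟨_, .symm _ _ (.rel _ _ (twistStep_lift (Fin.strictMono_natAdd n) hσ.2
      (by simp only [Fin.val_natAdd]; omega) hk)), convolutionMem_swap_right hσ p q⟩
  · rintro x _ ⟨p, q, hpq, rfl, hk⟩ σ hσ
    have hρ := convolutionMem_swap_right hσ p q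
    rw [mul_assoc, Equiv.swap_mul_self, mul_one] at hρ
    refine ⟨_, .rel _ _ ?_, hρ⟩
    have := twistStep_lift (Fin.strictMono_natAdd n) hρ.2
      (by simp only [Fin.val_natAdd]; omega) hk
    rwa [mul_assoc, Equiv.swap_mul_self, mul_one] at this

/-- For `k ≥ 1`: if some member of the `k`-twist class of `σ` lies in the
convolution `τ ⋆ τ'`, and `τ ≡ᵏ τ̃`, `τ' ≡ᵏ τ̃'`, then some member of the class of `σ` lies
in the convolution `τ̃ ⋆ τ̃'`. -/
theorem convolution_compatible_with_twist_congruence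
    (k : ℕ) (hk : 1 ≤ k) (n n' : ℕ) (hn : 1 ≤ n) (hn' : 1 ≤ n')
    (σ : Equiv.Perm (Fin (n + n')))
    (τ τt : Equiv.Perm (Fin n)) (τ' τt' : Equiv.Perm (Fin n'))
    (h1 : twistCong k τ τt) (h2 : twistCong k τ' τt')
    (h : ∃ σ' : Equiv.Perm (Fin (n + n')), twistCong k σ' σ ∧ convolutionMem τ τ' σ') :
    ∃ σ'' : Equiv.Perm (Fin (n + n')), twistCong k σ'' σ ∧ convolutionMem τt τt' σ'' := by
  obtain ⟨σ', hσ', hmem⟩ := h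
  obtain ⟨ρ, hρ, hmem⟩ := exists_convolutionMem_left h1 hmem
  obtain ⟨ω, hω, hmem⟩ := exists_convolutionMem_right h2 hmem
  exact ⟨ω, .trans _ _ _ hω (.trans _ _ _ hρ hσ'), hmem⟩
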